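/- Let H be a frustration-free Hamiltonian on a chain of n qudits as in the setup, with spectral gap γ and local gaps γ(t), and let H̄(t) be the coarse-grained Hamiltonian with spectral gap γ(H̄(t)), for a coarse-graining parameter t with 8L² < t < n/5. If γ(t) > 0, then γ(H̄(t)) ≤ 2γ/γ(t). -/

import Mathlib

open scoped ComplexOrder
open scoped Fin.NatCast

variable {E : Type*} [NormedAddCommGroup E] [InnerProductSpace ℂ E] [FiniteDimensional ℂ E]

/-- An orthogonal projector: a self-adjoint idempotent operator. -/
def IsProjector (P : E →L[ℂ] E) : Prop := IsSelfAdjoint P ∧ P * P = P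

/-- The smallest nonzero (for a positive semidefinite operator, smallest positive)
eigenvalue of an operator. -/
noncomputable def minNonzeroEig (A : E →L[ℂ] E) : ℝ :=
  sInf {c : ℝ | 0 < c ∧ ∃ v : E, v ≠ 0 ∧ A v = (c : ℂ) • v}

/-- The Loewner order: `A ⪯ B` iff `B − A` is positive semidefinite. -/
def Loewner (A B : E →L[ℂ] E) : Prop := (B - A).IsPositive

/-- The contiguous (cyclic) segment of `t` qudits starting at qudit `a` of the chain. -/
def seg {n : ℕ} [NeZero n] (a : Fin n) (t : ℕ) : Finset (Fin n) :=
  (Finset.range t).image (fun k : ℕ => a + (k : Fin n))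

/-- The bond `(i, i+1)` lies inside the region `F`. -/
def bondIn {n : ℕ} [NeZero n] (i : Fin n) (F : Finset (Fin n)) : Prop := i ∈ F ∧ i + 1 ∈ F

instance {n : ℕ} [NeZero n] (F : Finset (Fin n)) : DecidablePred (fun i => bondIn i F) :=
  fun i => inferInstanceAs (Decidable (i ∈ F ∧ i + 1 ∈ F))

/-- A frustration-free nearest-neighbour Hamiltonian `H = Σ_{i=1}^n H_i`,
`H_i = Σ_j P_{ij}`, on a (cyclic) chain of `n` qudits whose joint Hilbert space is `E`:
the `P_{ij}` are orthogonal projectors supported on the qudits `i, i+1`, each failing to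
commute with at most `g` other members of the family, and the family is partitioned into
`L` layers of pairwise commuting projectors. -/
structure ChainSetup (n : ℕ) [NeZero n] (E : Type*) [NormedAddCommGroup E]
    [InnerProductSpace ℂ E] [FiniteDimensional ℂ E] where
  /-- the number of projectors making up the interaction `H_i` on the bond `(i, i+1)` -/
  m : Fin n → ℕ
  /-- the projectors `P_{ij}`, supported on the qudits `i, i+1` -/
  P : (i : Fin n) → Fin (m i) → (E →L[ℂ] E)
  /-- the noncommutation degree -/
  g : ℕ
  /-- the number of layers -/
  L : ℕ
  /-- the assignment of each projector to a layer -/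
  layer : ((i : Fin n) × Fin (m i)) → Fin L
  proj : ∀ i j, IsProjector (P i j)
  /-- operational form of two-body locality: interactions on disjoint bonds commute -/
  locality : ∀ (i i' : Fin n) (j : Fin (m i)) (j' : Fin (m i')),
    Disjoint ({i, i + 1} : Finset (Fin n)) ({i', i' + 1} : Finset (Fin n)) →
    Commute (P i j) (P i' j')
  /-- each projector fails to commute with at most `g` other members of the family -/
  gbound : ∀ p : (i : Fin n) × Fin (m i),
    Nat.card {q : (i : Fin n) × Fin (m i) // q ≠ p ∧ ¬ Commute (P p.1 p.2) (P q.1 q.2)} ≤ g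
  /-- projectors within each layer pairwise commute -/
  layers : ∀ p q : (i : Fin n) × Fin (m i), layer p = layer q →
    Commute (P p.1 p.2) (P q.1 q.2)
  /-- frustration-freeness: there is a nonzero state annihilated by every `P_{ij}` -/
  frustFree : ∃ v : E, v ≠ 0 ∧ ∀ i j, P i j v = 0

namespace ChainSetup

variable {n : ℕ} [NeZero n]

/-- the bond interaction `H_i = Σ_j P_{ij}` -/
noncomputable def Hbond (C : ChainSetup n E) (i : Fin n) : E →L[ℂ] E := ∑ j, C.P i j

/-- the full Hamiltonian `H = Σ_i H_i` -/
noncomputable def Hfull (C : ChainSetup n E) : E →L[ℂ] E := ∑ i, C.Hbond i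

/-- `h_F = Σ_{i : i,i+1 ∈ F} H_i`, the Hamiltonian restricted to the region `F` -/
noncomputable def hamOn (C : ChainSetup n E) (F : Finset (Fin n)) : E →L[ℂ] E :=
  ∑ i ∈ Finset.univ.filter (fun i => bondIn i F), C.Hbond i

/-- the spectral gap `γ` of `H` -/
noncomputable def gap (C : ChainSetup n E) : ℝ := minNonzeroEig C.Hfull

/-- The local gap `γ(t)`: the minimum of the spectral gaps of `h_S` over contiguous
segments `S` of length `t`.  For the open chain (`openBC = true`) only segments that do
not wrap around the end of the chain are allowed. -/
noncomputable def localGap (C : ChainSetup n E) (openBC : Bool) (t : ℕ) : ℝ :=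
  sInf {x : ℝ | ∃ a : Fin n, (openBC = true → (a : ℕ) + t ≤ n) ∧
    x = minNonzeroEig (C.hamOn (seg a t))}

/-- `Q_F`: the orthogonal projector onto the orthogonal complement of the ground space of
`h_F` (for `F = ∅` this is `0`). -/
noncomputable def Qproj (C : ChainSetup n E) (F : Finset (Fin n)) : E →L[ℂ] E :=
  (LinearMap.ker (C.hamOn F : E →ₗ[ℂ] E))ᗮ.subtypeL ∘L
    Submodule.orthogonalProjection (LinearMap.ker (C.hamOn F : E →ₗ[ℂ] E))ᗮ

end ChainSetup

/-- the cyclic successor on `Fin M` -/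
def cyc {M : ℕ} (k : Fin M) : Fin M := ⟨((k : ℕ) + 1) % M, Nat.mod_lt _ k.pos⟩

/-- A coarse-graining configuration with parameter `t` on a chain of `n` qudits:
`⌊n/t⌋` pairwise disjoint contiguous segments `S_k = seg (s k) t` of length `t` in cyclic
order, with `r_k ≤ t/4` qudits between consecutive segments, and pairwise disjoint
contiguous segments `T_k` of length `t` placed between consecutive `S`-segments, each
overlapping `S_k` and `S_{k+1}` in at least `⌊t/4⌋` qudits.  For the open chain, exactly the
last `T`-segment is empty, `S_1` starts at the first qudit and `S_{⌊n/t⌋}` ends at the last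
qudit. -/
structure CoarseGraining (n : ℕ) [NeZero n] (t : ℕ) where
  /-- the number of `S`-segments, `⌊n/t⌋` -/
  M : ℕ
  hM : M = n / t
  hMpos : 0 < M
  /-- the starting points of the `S`-segments -/
  s : Fin M → Fin n
  /-- the numbers `r_k` of qudits sandwiched between consecutive `S`-segments -/
  r : Fin M → ℕ
  hr : ∀ k, 4 * r k ≤ t
  /-- the `S`-segments appear in cyclic order, `S_{k+1}` starting `t + r_k` after `S_k` -/
  hs : ∀ k : Fin M, s (cyc k) = s k + ((t + r k : ℕ) : Fin n)
  hSdisj : ∀ k l : Fin M, k ≠ l → Disjoint (seg (s k) t) (seg (s l) t)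
  /-- the `T`-segments -/
  T : Fin M → Finset (Fin n)
  hT : ∀ k, (∃ a : Fin n, T k = seg a t) ∨ T k = ∅
  hTdisj : ∀ k l : Fin M, k ≠ l → Disjoint (T k) (T l)
  hoverlap₁ : ∀ k, T k ≠ ∅ → t / 4 ≤ ((seg (s k) t) ∩ T k).card
  hoverlap₂ : ∀ k, T k ≠ ∅ → t / 4 ≤ ((seg (s (cyc k)) t) ∩ T k).card
  /-- only the last `T`-segment may be empty (the open-chain case), and in that case
  `S_1` starts at the first qudit and `S_M` ends at the last qudit -/
  hTempty : ∀ k, T k = ∅ → (k : ℕ) = M - 1 ∧ (s ⟨0, hMpos⟩ : ℕ) = 0 ∧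
    (s ⟨M - 1, Nat.sub_lt hMpos one_pos⟩ : ℕ) + t = n

namespace ChainSetup

variable {n : ℕ} [NeZero n]

/-- the coarse-grained Hamiltonian `H̄(t) = Σ_k (Q_{S_k} + Q_{T_k})` -/
noncomputable def coarseHam (C : ChainSetup n E) (t : ℕ) (G : CoarseGraining n t) :
    E →L[ℂ] E :=
  ∑ k, (C.Qproj (seg (G.s k) t) + C.Qproj (G.T k))

/-- the coarse-grained detectability operator
`DL(t) = (∏_k (1 − Q_{S_k}))·(∏_k (1 − Q_{T_k}))` -/
noncomputable def coarseDL (C : ChainSetup n E) (t : ℕ) (G : CoarseGraining n t) :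
    E →L[ℂ] E :=
  ((List.finRange G.M).map (fun k => 1 - C.Qproj (seg (G.s k) t))).prod *
    ((List.finRange G.M).map (fun k => 1 - C.Qproj (G.T k))).prod

/-- the detectability-lemma operator `DL(H) = ∏_{α=1}^L ∏_{(i,j) ∈ T_α} (1 − P_{ij})`,
taken layer by layer -/
noncomputable def DLHam (C : ChainSetup n E) : E →L[ℂ] E :=
  ((List.finRange C.L).map (fun α =>
    (Finset.univ.filter (fun p : (i : Fin n) × Fin (C.m i) => C.layer p = α)).noncommProd
      (fun p => 1 - C.P p.1 p.2)
      (fun p hp q hq _ =>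
        Commute.sub_left (Commute.one_left _)
          (Commute.sub_right (Commute.one_right _)
            (C.layers p q (by
              simp only [Finset.coe_filter, Set.mem_setOf_eq] at hp hq
              rw [hp.2, hq.2])))))).prod

end ChainSetup

lemma aux_mod {n x : ℕ} (h : x < 2 * n) : (x < n ∧ x % n = x) ∨ (n ≤ x ∧ x % n + n = x) := by
  by_cases hx : x < n
  · exact Or.inl ⟨hx, Nat.mod_eq_of_lt hx⟩
  · right
    have h1 : n ≤ x := by omega
    refine ⟨h1, ?_⟩
    rw [Nat.mod_eq_sub_mod h1, Nat.mod_eq_of_lt (by omega)]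
    omega

lemma aux_val_add {n : ℕ} [NeZero n] (a : Fin n) (x : ℕ) :
    ((a + (x : Fin n) : Fin n) : ℕ) = ((a : ℕ) + x) % n := by
  rw [Fin.val_add, Fin.val_natCast, Nat.add_mod_mod]

lemma aux_add_add {n : ℕ} [NeZero n] (a : Fin n) (x y : ℕ) :
    a + (x : Fin n) + (y : Fin n) = a + ((x + y : ℕ) : Fin n) := by
  apply Fin.ext
  rw [aux_val_add, aux_val_add, aux_val_add, Nat.mod_add_mod, add_assoc]

lemma aux_one {n : ℕ} [NeZero n] (a : Fin n) : a + 1 = a + ((1 : ℕ) : Fin n) := by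
  congr 1

lemma aux_cancel {n : ℕ} [NeZero n] (a : Fin n) (x y : ℕ)
    (h : a + (x : Fin n) = a + (y : Fin n)) : x % n = y % n := by
  have h1 := congrArg Fin.val h
  rw [aux_val_add, aux_val_add] at h1
  have h2 : (a : ℕ) + x ≡ a + y [MOD n] := h1
  exact Nat.ModEq.add_left_cancel' _ h2

lemma aux_exists {n : ℕ} [NeZero n] (a b : Fin n) : ∃ x : ℕ, x < n ∧ b = a + (x : Fin n) := by
  refine ⟨((b : ℕ) + (n - a)) % n, Nat.mod_lt _ (NeZero.pos n), ?_⟩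
  apply Fin.ext
  rw [aux_val_add, Nat.add_mod_mod]
  have ha := a.2
  have hb := b.2
  have : (a : ℕ) + (b + (n - a)) = b + n := by omega
  rw [this, Nat.add_mod_right, Nat.mod_eq_of_lt hb]

lemma aux_mem_seg {n : ℕ} [NeZero n] (a z : Fin n) (t : ℕ) :
    z ∈ seg a t ↔ ∃ k, k < t ∧ z = a + (k : Fin n) := by
  simp [seg, eq_comm]

lemma aux_find (p : ℕ → ℕ) (h0 : p 0 = 0) (x : ℕ) (K : ℕ) (hx : x < p K) :
    ∃ k, k < K ∧ p k ≤ x ∧ x < p (k + 1) := by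
  induction K with
  | zero => omega
  | succ K ih =>
    by_cases h : x < p K
    · obtain ⟨k, hk, h1⟩ := ih h
      exact ⟨k, by omega, h1⟩
    · exact ⟨K, by omega, by omega, hx⟩

lemma aux_locate {n t : ℕ} [NeZero n] (ht0 : 0 < t) (G : CoarseGraining n t)
    (i : Fin n) : ∃ k : Fin G.M, ∃ y, y < t + G.r k ∧ i = G.s k + (y : Fin n) := by
  classical
  set r' : ℕ → ℕ := fun j => if h : j < G.M then G.r ⟨j, h⟩ else 0 with hr'
  have hr4 : ∀ j, 4 * r' j ≤ t := by
    intro j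
    simp only [hr']
    split_ifs with h
    · exact G.hr _
    · omega
  set p : ℕ → ℕ := fun k => ∑ j ∈ Finset.range k, (t + r' j) with hp
  have hp0 : p 0 = 0 := by simp [hp]
  have hps : ∀ k, p (k + 1) = p k + (t + r' k) := by
    intro k
    simp [hp, Finset.sum_range_succ]
  have hpb : ∀ k, k * t ≤ p k ∧ 4 * p k ≤ 5 * (k * t) := by
    intro k
    induction k with
    | zero => simp [hp0]
    | succ k ih =>
      rw [hps, Nat.succ_mul]
      have := hr4 k
      omega
  set s0 := G.s ⟨0, G.hMpos⟩ with hs0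
  have hpos : ∀ k (hk : k < G.M), G.s ⟨k, hk⟩ = s0 + (p k : Fin n) := by
    intro k
    induction k with
    | zero =>
      intro hk
      rw [hp0]
      apply Fin.ext
      rw [aux_val_add, add_zero, Nat.mod_eq_of_lt s0.2]
    | succ k ih =>
      intro hk
      have hk' : k < G.M := by omega
      have h1 := G.hs ⟨k, hk'⟩
      have h2 : cyc (⟨k, hk'⟩ : Fin G.M) = ⟨k + 1, hk⟩ := by
        apply Fin.ext
        simp [cyc, Nat.mod_eq_of_lt hk]
      rw [h2, ih hk', aux_add_add] at h1
      rw [h1, hps]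
      simp [hr', hk']
  have hM1 : G.M - 1 < G.M := Nat.sub_lt G.hMpos one_pos
  have hMM : G.M - 1 + 1 = G.M := Nat.sub_add_cancel G.hMpos
  have hpM : p G.M % n = 0 := by
    have h1 := G.hs ⟨G.M - 1, hM1⟩
    have h2 : cyc (⟨G.M - 1, hM1⟩ : Fin G.M) = ⟨0, G.hMpos⟩ := by
      apply Fin.ext
      simp [cyc, hMM]
    rw [h2, hpos _ hM1, aux_add_add] at h1
    have h3 : p G.M = p (G.M - 1) + (t + G.r ⟨G.M - 1, hM1⟩) := by
      conv_lhs => rw [← hMM]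
      rw [hps]
      simp [hr', hM1]
    rw [← h3] at h1
    have h4 : s0 + ((0 : ℕ) : Fin n) = s0 + (p G.M : Fin n) := by
      rw [← h1]
      apply Fin.ext
      rw [aux_val_add, add_zero, Nat.mod_eq_of_lt s0.2]
    have := aux_cancel _ _ _ h4
    simpa using this.symm
  have hMt : G.M * t ≤ n := by
    have := G.hM
    rw [this]
    exact Nat.div_mul_le_self n t
  have hMt0 : 0 < G.M * t := Nat.mul_pos G.hMpos ht0
  have hpMn : p G.M = n := by
    have h1 := hpb G.M
    have hn := NeZero.pos n
    rcases aux_mod (n := n) (x := p G.M) (by omega) with h | h <;> omega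
  obtain ⟨x, hx, hix⟩ := aux_exists s0 i
  obtain ⟨k, hk, h1, h2⟩ := aux_find p hp0 x G.M (by omega)
  refine ⟨⟨k, hk⟩, x - p k, ?_, ?_⟩
  · have h3 := hps k
    have h4 : r' k = G.r ⟨k, hk⟩ := by simp [hr', hk]
    omega
  · rw [hpos k hk, aux_add_add, hix]
    congr 2
    omega

lemma aux_cover {n t : ℕ} [NeZero n] (ht4 : 4 ≤ t) (ht2 : 5 * t < n) (G : CoarseGraining n t)
    (i : Fin n) : (∃ k, bondIn i (seg (G.s k) t)) ∨ (∃ k, bondIn i (G.T k)) ∨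
      ((∃ k, G.T k = ∅) ∧ (i : ℕ) = n - 1) := by
  obtain ⟨k, y, hy, hi⟩ := aux_locate (by omega) G i
  have hr := G.hr k
  have hi1 : i + 1 = G.s k + ((y + 1 : ℕ) : Fin n) := by
    rw [aux_one, hi, aux_add_add]
  by_cases hyt : y + 1 < t
  · left
    refine ⟨k, ?_, ?_⟩
    · rw [aux_mem_seg]
      exact ⟨y, by omega, hi⟩
    · rw [aux_mem_seg]
      exact ⟨y + 1, by omega, hi1⟩
  right
  by_cases hT : G.T k = ∅
  · right
    refine ⟨⟨k, hT⟩, ?_⟩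
    obtain ⟨h1, h2, h3⟩ := G.hTempty k hT
    have hk : k = ⟨G.M - 1, Nat.sub_lt G.hMpos one_pos⟩ := Fin.ext h1
    rw [← hk] at h3
    have h4 : cyc k = ⟨0, G.hMpos⟩ := by
      apply Fin.ext
      have : G.M - 1 + 1 = G.M := Nat.sub_add_cancel G.hMpos
      simp [cyc, h1, this]
    have h5 := G.hs k
    rw [h4] at h5
    have h6 := congrArg Fin.val h5
    rw [aux_val_add, h2] at h6
    have h7 := congrArg Fin.val hi
    rw [aux_val_add] at h7
    rcases aux_mod (n := n) (x := (G.s k : ℕ) + (t + G.r k)) (by omega) with h | h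
    · omega
    · rcases aux_mod (n := n) (x := (G.s k : ℕ) + y) (by omega) with h' | h' <;> omega
  · left
    refine ⟨k, ?_⟩
    have ho1 := G.hoverlap₁ k hT
    have ho2 := G.hoverlap₂ k hT
    obtain ⟨a, ha⟩ := (G.hT k).resolve_right hT
    obtain ⟨z, hz⟩ := Finset.card_pos.mp (show 0 < ((seg (G.s k) t) ∩ G.T k).card by omega)
    obtain ⟨z', hz'⟩ := Finset.card_pos.mp
      (show 0 < ((seg (G.s (cyc k)) t) ∩ G.T k).card by omega)
    rw [ha, Finset.mem_inter, aux_mem_seg, aux_mem_seg] at hz hz'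
    obtain ⟨⟨u, hu, hzu⟩, ⟨w, hw, hzw⟩⟩ := hz
    obtain ⟨⟨u', hu', hzu'⟩, ⟨w', hw', hzw'⟩⟩ := hz'
    obtain ⟨b, hb, hab⟩ := aux_exists (G.s k) a
    rw [G.hs k, aux_add_add] at hzu'
    rw [hab, aux_add_add] at hzw hzw'
    have e1 := aux_cancel _ _ _ (hzu.symm.trans hzw)
    have e2 := aux_cancel _ _ _ (hzu'.symm.trans hzw')
    have key : b < t ∧ t + G.r k < b + t := by
      rcases aux_mod (n := n) (x := u) (by omega) with h1 | h1 <;>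
      rcases aux_mod (n := n) (x := b + w) (by omega) with h2 | h2 <;>
      rcases aux_mod (n := n) (x := t + G.r k + u') (by omega) with h3 | h3 <;>
      rcases aux_mod (n := n) (x := b + w') (by omega) with h4 | h4 <;> omega
    rw [ha]
    refine ⟨?_, ?_⟩
    · rw [aux_mem_seg]
      refine ⟨y - b, by omega, ?_⟩
      rw [hi, hab, aux_add_add]
      congr 2
      omega
    · rw [aux_mem_seg]
      refine ⟨y + 1 - b, by omega, ?_⟩
      rw [hi1, hab, aux_add_add]
      congr 2
      omega

lemma aux_minEig_nonneg (A : E →L[ℂ] E) : 0 ≤ minNonzeroEig A :=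
  Real.sInf_nonneg fun _ hx => hx.1.le

lemma aux_minEig_le (A : E →L[ℂ] E) {c : ℝ} (hc : 0 < c) {v : E} (hv : v ≠ 0)
    (h : A v = (c : ℂ) • v) : minNonzeroEig A ≤ c :=
  csInf_le ⟨0, fun _ hx => hx.1.le⟩ ⟨hc, v, hv, h⟩

/-- variational bound -/
lemma aux_var (A : E →L[ℂ] E) (hA : A.IsPositive) (v : E)
    (hv : ∀ w, A w = 0 → inner ℂ w v = 0) :
    minNonzeroEig A * ‖v‖ ^ 2 ≤ (inner ℂ (A v) v).re := by
  have hT : (A : E →ₗ[ℂ] E).IsSymmetric := hA.isSymmetric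
  set b := hT.eigenvectorBasis rfl with hb
  set l := hT.eigenvalues rfl with hl
  have hbe : ∀ i, A (b i) = (l i : ℂ) • b i := fun i => hT.apply_eigenvectorBasis rfl i
  have hb0 : ∀ i, b i ≠ 0 := fun i => b.orthonormal.ne_zero i
  have hl0 : ∀ i, 0 ≤ l i := by
    intro i
    have h1 := hA.re_inner_nonneg_left (b i)
    rw [hbe, inner_smul_left, inner_self_eq_norm_sq_to_K, b.orthonormal.1 i] at h1
    simpa using h1
  have h1 : (inner ℂ (A v) v).re = ∑ i, l i * ‖inner ℂ (b i) v‖ ^ 2 := by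
    rw [← b.sum_inner_mul_inner (A v) v, Complex.re_sum]
    refine Finset.sum_congr rfl fun i _ => ?_
    have h2 : inner ℂ (A v) (b i) = (l i : ℂ) * inner ℂ v (b i) := by
      have := hT v (b i)
      simp only [ContinuousLinearMap.coe_coe] at this
      rw [this, hbe, inner_smul_right]
    have h3 : inner ℂ v (b i) * inner ℂ (b i) v = ((‖inner ℂ (b i) v‖ ^ 2 : ℝ) : ℂ) := by
      rw [← inner_conj_symm v (b i), Complex.conj_mul']
      norm_cast
    rw [h2, mul_assoc, h3, ← Complex.ofReal_mul, Complex.ofReal_re]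
  rw [h1, ← b.sum_sq_norm_inner_right v, Finset.mul_sum]
  refine Finset.sum_le_sum fun i _ => ?_
  rcases (hl0 i).eq_or_lt with h | h
  · have : inner ℂ (b i) v = 0 := hv _ (by rw [hbe, ← h]; simp)
    simp [this]
  · exact mul_le_mul_of_nonneg_right (aux_minEig_le A h (hb0 i) (hbe i)) (by positivity)

lemma aux_exists_eig (A : E →L[ℂ] E) (hA : A.IsPositive) (h0 : A ≠ 0) :
    ∃ c : ℝ, 0 < c ∧ ∃ v : E, v ≠ 0 ∧ A v = (c : ℂ) • v := by
  by_contra hcon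
  push Not at hcon
  apply h0
  have hT : (A : E →ₗ[ℂ] E).IsSymmetric := hA.isSymmetric
  set b := hT.eigenvectorBasis rfl with hb
  set l := hT.eigenvalues rfl with hl
  have hbe : ∀ i, A (b i) = (l i : ℂ) • b i := fun i => hT.apply_eigenvectorBasis rfl i
  have hb0 : ∀ i, b i ≠ 0 := fun i => b.orthonormal.ne_zero i
  have hl0 : ∀ i, 0 ≤ l i := by
    intro i
    have h1 := hA.re_inner_nonneg_left (b i)
    rw [hbe, inner_smul_left, inner_self_eq_norm_sq_to_K, b.orthonormal.1 i] at h1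
    simpa using h1
  have : (A : E →ₗ[ℂ] E) = 0 := by
    apply b.toBasis.ext
    intro i
    rcases (hl0 i).eq_or_lt with h | h
    · simp [hbe, ← h]
    · exact absurd (hbe i) (hcon _ h _ (hb0 i))
  ext v
  exact congrArg (fun f => f v) this

lemma aux_proj_inner {P : E →L[ℂ] E} (hP : IsProjector P) (v : E) :
    (inner ℂ (P v) v).re = ‖P v‖ ^ 2 := by
  have h1 : inner ℂ (P (P v)) v = inner ℂ (P v) (P v) :=
    hP.1.isSymmetric (P v) v
  have h2 : P (P v) = P v := congrArg (fun f => f v) hP.2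
  rw [h2] at h1
  rw [h1, inner_self_eq_norm_sq_to_K]
  norm_cast

lemma aux_proj_pos {P : E →L[ℂ] E} (hP : IsProjector P) : P.IsPositive := by
  refine ⟨hP.1.isSymmetric, fun v => ?_⟩
  have := aux_proj_inner hP v
  change 0 ≤ (inner ℂ (P v) v).re
  rw [this]
  positivity

namespace ChainSetup

variable {n : ℕ} [NeZero n]

/-- energy of a bond -/
noncomputable def auxEn (C : ChainSetup n E) (v : E) (i : Fin n) : ℝ := ∑ j, ‖C.P i j v‖ ^ 2

lemma auxEn_nonneg (C : ChainSetup n E) (v : E) (i : Fin n) : 0 ≤ C.auxEn v i :=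
  Finset.sum_nonneg fun _ _ => by positivity

lemma aux_Hbond_inner (C : ChainSetup n E) (v : E) (i : Fin n) :
    (inner ℂ (C.Hbond i v) v).re = C.auxEn v i := by
  simp only [Hbond, auxEn, ContinuousLinearMap.sum_apply, sum_inner, Complex.re_sum]
  exact Finset.sum_congr rfl fun j _ => aux_proj_inner (C.proj i j) v

lemma aux_sum_inner (C : ChainSetup n E) (v : E) (s : Finset (Fin n)) :
    (inner ℂ ((∑ i ∈ s, C.Hbond i) v) v).re = ∑ i ∈ s, C.auxEn v i := by
  simp only [ContinuousLinearMap.sum_apply, sum_inner, Complex.re_sum, aux_Hbond_inner]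

lemma aux_pos_sum {ι : Type*} (s : Finset ι) (f : ι → (E →L[ℂ] E))
    (h : ∀ i, (f i).IsPositive) : (∑ i ∈ s, f i).IsPositive := by
  classical
  induction s using Finset.induction_on with
  | empty => simpa using ContinuousLinearMap.isPositive_zero
  | insert a s ha ih =>
    rw [Finset.sum_insert ha]
    exact (h a).add ih

lemma aux_Hbond_pos (C : ChainSetup n E) (i : Fin n) : (C.Hbond i).IsPositive :=
  aux_pos_sum _ _ fun j => aux_proj_pos (C.proj i j)

lemma aux_hamOn_pos (C : ChainSetup n E) (F : Finset (Fin n)) : (C.hamOn F).IsPositive :=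
  aux_pos_sum _ _ fun i => C.aux_Hbond_pos i

lemma aux_Qproj_eq (C : ChainSetup n E) (F : Finset (Fin n)) :
    C.Qproj F = (LinearMap.ker (C.hamOn F : E →ₗ[ℂ] E))ᗮ.starProjection := rfl

lemma aux_Qproj_isProj (C : ChainSetup n E) (F : Finset (Fin n)) : IsProjector (C.Qproj F) := by
  rw [aux_Qproj_eq]
  exact ⟨isSelfAdjoint_starProjection _, (Submodule.isIdempotentElem_starProjection _)⟩

lemma aux_Qproj_zero (C : ChainSetup n E) (F : Finset (Fin n)) (v : E) (h : C.Qproj F v = 0) :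
    C.hamOn F v = 0 := by
  rw [aux_Qproj_eq, Submodule.starProjection_apply_eq_zero_iff,
    Submodule.orthogonal_orthogonal] at h
  exact h

lemma aux_Q_bound (C : ChainSetup n E) (F : Finset (Fin n)) (v : E) :
    minNonzeroEig (C.hamOn F) * ‖C.Qproj F v‖ ^ 2 ≤ (inner ℂ (C.hamOn F v) v).re := by
  set A := C.hamOn F with hA
  set q := C.Qproj F v with hq
  have hApos : A.IsPositive := C.aux_hamOn_pos F
  have h1 : ∀ w, A w = 0 → inner ℂ w q = 0 := by
    intro w hw
    have : q ∈ (LinearMap.ker (C.hamOn F : E →ₗ[ℂ] E))ᗮ := by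
      rw [hq, aux_Qproj_eq]
      exact Submodule.starProjection_apply_mem _ _
    exact (Submodule.mem_orthogonal _ _).1 this w hw
  have h2 : A (v - q) = 0 := by
    apply C.aux_Qproj_zero
    rw [map_sub, hq]
    have : C.Qproj F (C.Qproj F v) = C.Qproj F v :=
      congrArg (fun f => f v) (C.aux_Qproj_isProj F).2
    rw [this, sub_self]
  have h3 : A v = A q := by
    rw [map_sub, sub_eq_zero] at h2
    exact h2
  have h4 : inner ℂ (A v) v = inner ℂ (A q) q := by
    have h5 : inner ℂ (A q) v = inner ℂ q (A v) := hApos.isSymmetric q v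
    have h6 : inner ℂ (A q) q = inner ℂ q (A q) := hApos.isSymmetric q q
    rw [h6, ← h3, ← h5, h3]
  rw [h4]
  exact aux_var A hApos q h1

lemma aux_bond_zero (C : ChainSetup n E) (F : Finset (Fin n)) (v : E) (h : C.hamOn F v = 0)
    (i : Fin n) (hi : bondIn i F) : C.auxEn v i = 0 := by
  have h1 := C.aux_sum_inner v (Finset.univ.filter (fun i => bondIn i F))
  change (inner ℂ (C.hamOn F v) v).re = _ at h1
  rw [h, inner_zero_left, Complex.zero_re, eq_comm,
    Finset.sum_eq_zero_iff_of_nonneg (fun i _ => C.auxEn_nonneg v i)] at h1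
  exact h1 i (by simpa using hi)

lemma aux_Hbond_zero (C : ChainSetup n E) (v : E) (i : Fin n) (h : C.auxEn v i = 0) :
    C.Hbond i v = 0 := by
  rw [auxEn, Finset.sum_eq_zero_iff_of_nonneg (fun i _ => by positivity)] at h
  simp only [Hbond, ContinuousLinearMap.sum_apply]
  refine Finset.sum_eq_zero fun j hj => ?_
  simpa using h j hj

lemma aux_disj_sum (C : ChainSetup n E) (v : E) {M : ℕ} (F : Fin M → Finset (Fin n))
    (hF : ∀ k l, k ≠ l → Disjoint (F k) (F l)) :
    ∑ k, (inner ℂ (C.hamOn (F k) v) v).re ≤ (inner ℂ (C.Hfull v) v).re := by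
  have h1 : ∀ k, (inner ℂ (C.hamOn (F k) v) v).re =
      ∑ i ∈ Finset.univ.filter (fun i => bondIn i (F k)), C.auxEn v i := fun k =>
    C.aux_sum_inner v _
  have h2 : (inner ℂ (C.Hfull v) v).re = ∑ i, C.auxEn v i := C.aux_sum_inner v _
  rw [h2, Finset.sum_congr rfl (fun k _ => h1 k), ← Finset.sum_biUnion]
  · exact Finset.sum_le_sum_of_subset_of_nonneg (Finset.subset_univ _)
      (fun i _ _ => C.auxEn_nonneg v i)
  · intro k _ l _ hkl
    rw [Function.onFun, Finset.disjoint_left]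
    intro i hi hi'
    simp only [Finset.mem_filter, Finset.mem_univ, true_and] at hi hi'
    exact Finset.disjoint_left.1 (hF k l hkl) hi.1 hi'.1

end ChainSetup

/-- for a frustration-free chain Hamiltonian as in the setup with spectral
gap `γ` and local gaps `γ(t)`, and a coarse-grained Hamiltonian `H̄(t)` with spectral gap
`γ(H̄(t))` for a coarse-graining parameter `8L² < t < n/5`: if `γ(t) > 0` then
`γ(H̄(t)) ≤ 2γ/γ(t)`. -/
theorem stmt_12 {n : ℕ} [NeZero n] (C : ChainSetup n E)
    (t : ℕ) (ht1 : 8 * C.L ^ 2 < t) (ht2 : 5 * t < n)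
    (G : CoarseGraining n t)
    (openBC : Bool)
    (hopen : openBC = true → C.Hbond ⟨n - 1, by omega⟩ = 0)
    (hopenSeg : openBC = true →
      (∀ k, (G.s k : ℕ) + t ≤ n) ∧ ∀ k (a : Fin n), G.T k = seg a t → (a : ℕ) + t ≤ n)
    (hTopen : ∀ k, G.T k = ∅ → openBC = true)
    (hγt : 0 < C.localGap openBC t) :
    minNonzeroEig (C.coarseHam t G) ≤ 2 * C.gap / C.localGap openBC t := by
  classical
  set g := C.localGap openBC t with hg
  have hloc : ∀ a : Fin n, (openBC = true → (a : ℕ) + t ≤ n) →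
      g ≤ minNonzeroEig (C.hamOn (seg a t)) := by
    intro a ha
    refine csInf_le ⟨0, ?_⟩ ⟨a, ha, rfl⟩
    rintro x ⟨a, _, rfl⟩
    exact aux_minEig_nonneg _
  -- the bounds on the coarse projectors
  have hS : ∀ v k, g * ‖C.Qproj (seg (G.s k) t) v‖ ^ 2 ≤
      (inner ℂ (C.hamOn (seg (G.s k) t) v) v).re := by
    intro v k
    refine le_trans ?_ (C.aux_Q_bound _ v)
    exact mul_le_mul_of_nonneg_right (hloc _ fun h => (hopenSeg h).1 k) (by positivity)
  have hT : ∀ v k, g * ‖C.Qproj (G.T k) v‖ ^ 2 ≤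
      (inner ℂ (C.hamOn (G.T k) v) v).re := by
    intro v k
    rcases G.hT k with ⟨a, ha⟩ | h
    · refine le_trans ?_ (C.aux_Q_bound _ v)
      rw [ha]
      exact mul_le_mul_of_nonneg_right (hloc _ fun h => (hopenSeg h).2 k a ha) (by positivity)
    · have h0 : C.hamOn (G.T k) = 0 := by
        rw [h]
        simp [ChainSetup.hamOn, bondIn]
      have h1 : C.Qproj (G.T k) v = 0 := by
        rw [ChainSetup.aux_Qproj_eq, Submodule.starProjection_apply_eq_zero_iff,
          Submodule.orthogonal_orthogonal, LinearMap.mem_ker, h0]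
        rfl
      rw [h1, h0]
      simp
  have hcoarse : ∀ v, (inner ℂ (C.coarseHam t G v) v).re =
      ∑ k, (‖C.Qproj (seg (G.s k) t) v‖ ^ 2 + ‖C.Qproj (G.T k) v‖ ^ 2) := by
    intro v
    simp only [ChainSetup.coarseHam, ContinuousLinearMap.sum_apply, sum_inner, Complex.re_sum,
      ContinuousLinearMap.add_apply, inner_add_left, Complex.add_re,
      aux_proj_inner (C.aux_Qproj_isProj _)]
  have hup : ∀ v, g * (inner ℂ (C.coarseHam t G v) v).re ≤ 2 * (inner ℂ (C.Hfull v) v).re := by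
    intro v
    rw [hcoarse, Finset.sum_add_distrib, mul_add, Finset.mul_sum, Finset.mul_sum, two_mul]
    refine add_le_add ?_ ?_
    · exact (Finset.sum_le_sum fun k _ => hS v k).trans
        (C.aux_disj_sum v (fun k => seg (G.s k) t) G.hSdisj)
    · exact (Finset.sum_le_sum fun k _ => hT v k).trans (C.aux_disj_sum v G.T G.hTdisj)
  have hcpos : (C.coarseHam t G).IsPositive :=
    ChainSetup.aux_pos_sum _ _ fun k =>
      (aux_proj_pos (C.aux_Qproj_isProj _)).add (aux_proj_pos (C.aux_Qproj_isProj _))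
  have hHpos : C.Hfull.IsPositive := ChainSetup.aux_pos_sum _ _ fun i => C.aux_Hbond_pos i
  -- the kernel of the coarse-grained Hamiltonian
  have hker : ∀ w, C.coarseHam t G w = 0 → C.Hfull w = 0 := by
    intro w hw
    have h1 := hcoarse w
    rw [hw, inner_zero_left, Complex.zero_re, eq_comm,
      Finset.sum_eq_zero_iff_of_nonneg (fun k _ => by positivity)] at h1
    have h2 : ∀ k, C.Qproj (seg (G.s k) t) w = 0 ∧ C.Qproj (G.T k) w = 0 := by
      intro k
      have h3 := h1 k (Finset.mem_univ _)
      rw [add_eq_zero_iff_of_nonneg (by positivity) (by positivity)] at h3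
      simpa using h3
    simp only [ChainSetup.Hfull, ContinuousLinearMap.sum_apply]
    refine Finset.sum_eq_zero fun i _ => ?_
    by_cases hL : C.L = 0
    · simp only [ChainSetup.Hbond, ContinuousLinearMap.sum_apply]
      refine Finset.sum_eq_zero fun j _ => ?_
      have := (C.layer ⟨i, j⟩).2
      omega
    · have hL1 : 1 ≤ C.L ^ 2 := Nat.one_le_pow _ _ (by omega)
      rcases aux_cover (by omega) ht2 G i with ⟨k, hk⟩ | ⟨k, hk⟩ | ⟨⟨k, hk⟩, hi⟩
      · exact C.aux_Hbond_zero w i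
          (C.aux_bond_zero _ w (C.aux_Qproj_zero _ w (h2 k).1) i hk)
      · exact C.aux_Hbond_zero w i
          (C.aux_bond_zero _ w (C.aux_Qproj_zero _ w (h2 k).2) i hk)
      · have h3 := hopen (hTopen k hk)
        have h4 : i = ⟨n - 1, by omega⟩ := Fin.ext hi
        rw [h4, h3]
        rfl
  -- `H` is nonzero
  have hH0 : C.Hfull ≠ 0 := by
    intro h0
    have ha : g ≤ minNonzeroEig (C.hamOn (seg (G.s ⟨0, G.hMpos⟩) t)) :=
      hloc _ fun h => (hopenSeg h).1 _
    have hz : C.hamOn (seg (G.s ⟨0, G.hMpos⟩) t) = 0 := by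
      ext v
      have h1 := C.aux_sum_inner v Finset.univ
      change (inner ℂ (C.Hfull v) v).re = _ at h1
      rw [h0, ContinuousLinearMap.zero_apply, inner_zero_left, Complex.zero_re, eq_comm,
        Finset.sum_eq_zero_iff_of_nonneg (fun i _ => C.auxEn_nonneg v i)] at h1
      simp only [ChainSetup.hamOn, ContinuousLinearMap.sum_apply, ContinuousLinearMap.zero_apply]
      exact Finset.sum_eq_zero fun i _ => C.aux_Hbond_zero v i (h1 i (Finset.mem_univ _))
    have hm : minNonzeroEig (0 : E →L[ℂ] E) = 0 := by
      have : {c : ℝ | 0 < c ∧ ∃ v : E, v ≠ 0 ∧ (0 : E →L[ℂ] E) v = (c : ℂ) • v} = ∅ := by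
        ext c
        simp only [Set.mem_setOf_eq, Set.mem_empty_iff_false, iff_false]
        rintro ⟨hc, v, hv, h⟩
        rw [ContinuousLinearMap.zero_apply, eq_comm, smul_eq_zero] at h
        rcases h with h | h
        · exact hc.ne' (by exact_mod_cast h)
        · exact hv h
      rw [minNonzeroEig, this, Real.sInf_empty]
    rw [hz, hm] at ha
    linarith
  rw [le_div_iff₀ hγt]
  have hfin : minNonzeroEig (C.coarseHam t G) * g / 2 ≤ C.gap := by
    refine le_csInf (aux_exists_eig _ hHpos hH0) ?_
    rintro c ⟨hc, v, hv, hvc⟩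
    have horth : ∀ w, C.coarseHam t G w = 0 → inner ℂ w v = 0 := by
      intro w hw
      have h1 : inner ℂ (C.Hfull w) v = inner ℂ w (C.Hfull v) := hHpos.isSymmetric w v
      rw [hker w hw, inner_zero_left, hvc, inner_smul_right, eq_comm, mul_eq_zero] at h1
      rcases h1 with h1 | h1
      · exact absurd (by exact_mod_cast h1) hc.ne'
      · exact h1
    have h2 := aux_var _ hcpos v horth
    have h3 := hup v
    have h4 : (inner ℂ (C.Hfull v) v).re = c * ‖v‖ ^ 2 := by
      rw [hvc, inner_smul_left, inner_self_eq_norm_sq_to_K, Complex.conj_ofReal, Complex.re_ofReal_mul]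
      norm_cast
    rw [h4] at h3
    have hv2 : 0 < ‖v‖ ^ 2 := by
      have := norm_pos_iff.2 hv
      positivity
    have h5 : (minNonzeroEig (C.coarseHam t G) * g) * ‖v‖ ^ 2 ≤ (2 * c) * ‖v‖ ^ 2 := by
      nlinarith [mul_le_mul_of_nonneg_left h2 hγt.le]
    have h6 := le_of_mul_le_mul_right h5 hv2
    linarith
  linarith
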